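/- Let σ > 0, κ > 0, α > 0, μ₀ ∈ ℝ and r > μ₀ + σ²/2; let n be the unique positive root of (σ²/2)n² + μ₀n − r = 0, set x₀* := ln(κn/(n−1)) and A(y) := (κ/(αn(n−1)))·(κn/(n−1))^{−n}·(1 − e^{−αny}). Define w : ℝ × [0,∞) → ℝ by w(x,y) = A(y)e^{nx} if x ≤ x₀*; w(x,y) = A(y − (x−x₀*)/α)·e^{n x₀*} + (1/α)(e^x − e^{x₀*}) − (κ/α)(x − x₀*) if x > x₀* and y > (x−x₀*)/α; and w(x,y) = (1/α)e^x(1 − e^{−αy}) − κy if x > x₀* and 0 ≤ y ≤ (x−x₀*)/α. Then w is continuous on ℝ × [0,∞). -/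

import Mathlib

/-!
On each region `w` is given by a continuous formula, so only the agreement on the interfaces
matters. It uses nothing about `A` beyond its continuity and `A 0 = 0`: on `x = x₀` the shift
`(x - x₀) / α` vanishes, and on `α * y = x - x₀` one has `exp x * exp (-(α * y)) = exp x₀`.
The formulas do not match along `x = x₀`, `y < 0`, so `y` is replaced by `max y 0`, which turns
`w` into a globally continuous function that agrees with it on `y ≥ 0`.
-/


/-- The explicit piecewise candidate value function `w` of the full-information benchmark
problem is continuous on `ℝ × [0,∞)`. -/
theorem stmt13 (σ κ α μ₀ r n x₀ : ℝ) (hσ : 0 < σ) (hκ : 0 < κ) (hα : 0 < α)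
    (hr : μ₀ + σ ^ 2 / 2 < r)
    (hn : 0 < n) (hroot : σ ^ 2 / 2 * n ^ 2 + μ₀ * n - r = 0)
    (hx₀ : x₀ = Real.log (κ * n / (n - 1)))
    (A : ℝ → ℝ)
    (hA : ∀ y : ℝ, A y = κ / (α * n * (n - 1)) * (κ * n / (n - 1)) ^ (-n) *
      (1 - Real.exp (-(α * n * y))))
    (w : ℝ → ℝ → ℝ)
    (hw : ∀ x y : ℝ, w x y =
      if x ≤ x₀ then A y * Real.exp (n * x)
      else if (x - x₀) / α < y then
        A (y - (x - x₀) / α) * Real.exp (n * x₀) +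
          (1 / α) * (Real.exp x - Real.exp x₀) - κ / α * (x - x₀)
      else (1 / α) * Real.exp x * (1 - Real.exp (-(α * y))) - κ * y) :
    ContinuousOn (fun p : ℝ × ℝ => w p.1 p.2) {p : ℝ × ℝ | 0 ≤ p.2} := by
  have hAc : Continuous A := by
    rw [funext hA]
    fun_prop
  have hA0 : A 0 = 0 := by simp [hA]
  have key : Continuous (fun p : ℝ × ℝ => w p.1 (max p.2 0)) := by
    simp only [hw]
    refine Continuous.if_le (by fun_prop) ?_ continuous_fst continuous_const ?_
    · -- The strict test is reversed into a non-strict one to fit `Continuous.if_le`.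
      simp only [← not_le, ite_not]
      refine Continuous.if_le (by fun_prop) (by fun_prop) (by fun_prop) (by fun_prop) ?_
      intro p hp
      have h1 : α * max p.2 0 = p.1 - x₀ := by
        rw [hp]
        field_simp
      have h2 : Real.exp p.1 * Real.exp (-(α * max p.2 0)) = Real.exp x₀ := by
        rw [← Real.exp_add, h1]
        congr 1
        ring
      have h3 : κ / α * (p.1 - x₀) = κ * max p.2 0 := by
        rw [← h1]
        field_simp
      rw [h3, ← h2, hp, sub_self, hA0]
      ring
    · intro p hp
      rw [hp]
      rcases (le_max_right p.2 0).eq_or_lt with h | h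
      · simp [← h, hA0]
      · simp [h]
  refine key.continuousOn.congr fun p hp => ?_
  have hp' : max p.2 0 = p.2 := max_eq_left hp
  simp only [hp']
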